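/- Let M ≥ 1, let p̂ ∈ ℝ^M with p̂_m > 0 for all m and Σ_m p̂_m = 1, let ℓ ∈ ℝ^M, let φ : ℝ → ℝ, let θ ≥ 0, and let φStar : ℝ → ℝ satisfy the Fenchel–Young inequality u·y − φ(u) ≤ φStar(y) for all u ≥ 0 and all y ∈ ℝ. Suppose w ∈ ℝ^M satisfies w_m ≥ 0 for all m, Σ_m w_m p̂_m = 1, and Σ_m φ(w_m) p̂_m ≤ θ. Then for every λ > 0 and every ν ∈ ℝ, Σ_m ℓ_m w_m p̂_m ≥ ν − θ·λ − λ·Σ_m p̂_m · φStar((ν − ℓ_m)/λ). -/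

import Mathlib

/-!
Put multipliers `lam` on the divergence constraint and `ν` on the normalization constraint. The
Lagrangian is at most the loss at every feasible density. It also separates over the scenarios, so
it can be bounded below one scenario at a time, and there the Fenchel–Young inequality at slope
`(ν - ℓ m) / lam`, scaled by `lam`, gives exactly the dual objective.
-/

section DivergenceLagrangian

variable {ι K : Type*} [Field K]

/-- The Lagrangian of minimizing the expected loss `∑ ℓ m * w m * p m` over densities `w` with
respect to the weights `p`, with multiplier `lam` for the constraint `∑ φ (w m) * p m ≤ θ` and `ν`
for the constraint `∑ w m * p m = 1`. The sums run over a finite set `s` of scenarios. -/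
def divergenceLagrangian (s : Finset ι) (p ℓ : ι → K) (φ : K → K) (θ : K) (w : ι → K)
    (lam ν : K) : K :=
  ∑ m ∈ s, ℓ m * w m * p m + lam * (∑ m ∈ s, φ (w m) * p m - θ) +
    ν * (1 - ∑ m ∈ s, w m * p m)

theorem divergenceLagrangian_eq_add_sum (s : Finset ι) (p ℓ : ι → K) (φ : K → K) (θ : K)
    (w : ι → K) (lam ν : K) :
    divergenceLagrangian s p ℓ φ θ w lam ν =
      ν - θ * lam + ∑ m ∈ s, p m * (ℓ m * w m + lam * φ (w m) - ν * w m) := by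
  have sum_eq : ∑ m ∈ s, p m * (ℓ m * w m + lam * φ (w m) - ν * w m) =
      ∑ m ∈ s, ℓ m * w m * p m + lam * ∑ m ∈ s, φ (w m) * p m - ν * ∑ m ∈ s, w m * p m := by
    rw [Finset.mul_sum, Finset.mul_sum, ← Finset.sum_add_distrib, ← Finset.sum_sub_distrib]
    exact Finset.sum_congr rfl fun m _ => by ring
  rw [divergenceLagrangian, sum_eq]
  ring

variable [LinearOrder K] [IsStrictOrderedRing K]

theorem divergenceLagrangian_le_of_feasible {s : Finset ι} {p w : ι → K} {φ : K → K} {θ lam : K}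
    (hw1 : ∑ m ∈ s, w m * p m = 1) (hwθ : ∑ m ∈ s, φ (w m) * p m ≤ θ) (hlam : 0 ≤ lam)
    (ℓ : ι → K) (ν : K) :
    divergenceLagrangian s p ℓ φ θ w lam ν ≤ ∑ m ∈ s, ℓ m * w m * p m := by
  have penalty_nonpos : lam * (∑ m ∈ s, φ (w m) * p m - θ) ≤ 0 :=
    mul_nonpos_of_nonneg_of_nonpos hlam (sub_nonpos.mpr hwθ)
  rw [divergenceLagrangian, hw1, sub_self, mul_zero, add_zero]
  exact add_le_of_nonpos_right penalty_nonpos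

theorem neg_mul_le_of_mul_div_sub_le {u l ν f c lam : K} (hlam : 0 < lam)
    (h : u * ((ν - l) / lam) - f ≤ c) : -(lam * c) ≤ l * u + lam * f - ν * u := by
  have scaled : lam * (u * ((ν - l) / lam) - f) ≤ lam * c :=
    mul_le_mul_of_nonneg_left h hlam.le
  have scaled_eq : lam * (u * ((ν - l) / lam) - f) = ν * u - l * u - lam * f := by
    field_simp
  linarith

theorem le_divergenceLagrangian_of_fenchelYoung {s : Finset ι} {p w : ι → K} {φ φStar : K → K}
    {D : Set K} {lam : K} (hp : ∀ m ∈ s, 0 ≤ p m)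
    (hFY : ∀ u ∈ D, ∀ y, u * y - φ u ≤ φStar y) (hw : ∀ m ∈ s, w m ∈ D) (hlam : 0 < lam)
    (ℓ : ι → K) (θ ν : K) :
    ν - θ * lam - lam * ∑ m ∈ s, p m * φStar ((ν - ℓ m) / lam) ≤
      divergenceLagrangian s p ℓ φ θ w lam ν :=
  calc ν - θ * lam - lam * ∑ m ∈ s, p m * φStar ((ν - ℓ m) / lam)
    _ = ν - θ * lam + ∑ m ∈ s, p m * -(lam * φStar ((ν - ℓ m) / lam)) := by
      simp only [mul_neg, Finset.sum_neg_distrib, Finset.mul_sum, mul_left_comm, sub_eq_add_neg]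
    _ ≤ ν - θ * lam + ∑ m ∈ s, p m * (ℓ m * w m + lam * φ (w m) - ν * w m) := by
      gcongr with m hm
      · exact hp m hm
      · exact neg_mul_le_of_mul_div_sub_le hlam (hFY (w m) (hw m hm) _)
    _ = divergenceLagrangian s p ℓ φ θ w lam ν :=
      (divergenceLagrangian_eq_add_sum s p ℓ φ θ w lam ν).symm

theorem phi_divergence_weak_duality_general {s : Finset ι} {p w : ι → K} {φ φStar : K → K}
    {D : Set K} {θ lam : K} (hp : ∀ m ∈ s, 0 ≤ p m)
    (hFY : ∀ u ∈ D, ∀ y, u * y - φ u ≤ φStar y) (hw : ∀ m ∈ s, w m ∈ D)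
    (hw1 : ∑ m ∈ s, w m * p m = 1) (hwθ : ∑ m ∈ s, φ (w m) * p m ≤ θ) (hlam : 0 < lam)
    (ℓ : ι → K) (ν : K) :
    ν - θ * lam - lam * ∑ m ∈ s, p m * φStar ((ν - ℓ m) / lam) ≤ ∑ m ∈ s, ℓ m * w m * p m :=
  (le_divergenceLagrangian_of_fenchelYoung hp hFY hw hlam ℓ θ ν).trans
    (divergenceLagrangian_le_of_feasible hw1 hwθ hlam.le ℓ ν)

end DivergenceLagrangian

/-- Weak duality for the φ-divergence distributionally robust
problem. If `φStar` satisfies the Fenchel–Young inequality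
`u y − φ(u) ≤ φStar(y)` for all `u ≥ 0` and `y ∈ ℝ`, and `w` is a feasible
density (`wₘ ≥ 0`, `∑ wₘ p̂ₘ = 1`, `∑ φ(wₘ) p̂ₘ ≤ θ`), then every dual pair
`(λ, ν)` with `λ > 0` gives the lower bound
`∑ ℓₘ wₘ p̂ₘ ≥ ν − θλ − λ ∑ p̂ₘ φStar((ν − ℓₘ)/λ)`. -/
theorem phi_divergence_weak_duality (M : ℕ) (hM : 1 ≤ M)
    (phat : Fin M → ℝ) (hphat : ∀ m, 0 < phat m) (hsum : ∑ m, phat m = 1)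
    (ℓ : Fin M → ℝ) (φ φStar : ℝ → ℝ) (θ : ℝ) (hθ : 0 ≤ θ)
    (hFY : ∀ u : ℝ, 0 ≤ u → ∀ y : ℝ, u * y - φ u ≤ φStar y)
    (w : Fin M → ℝ) (hw : ∀ m, 0 ≤ w m)
    (hw1 : ∑ m, w m * phat m = 1)
    (hwθ : ∑ m, φ (w m) * phat m ≤ θ)
    (lam : ℝ) (hlam : 0 < lam) (ν : ℝ) :
    ν - θ * lam - lam * ∑ m, phat m * φStar ((ν - ℓ m) / lam) ≤
      ∑ m, ℓ m * w m * phat m :=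
  phi_divergence_weak_duality_general (D := Set.Ici 0) (fun m _ => (hphat m).le) hFY
    (fun m _ => hw m) hw1 hwθ hlam ℓ ν
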